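/- Wigner detection (Theorem det_wgn). Fix n ∈ ℕ, λ > 0, A ≥ 1, ρ ∈ (0,1] with ρn ∈ ℕ, and let x ∈ ℝⁿ be a (ρ,A)-sparse vector. Let Y be drawn either from the planted distribution ℙₙ (Y = W + λ x xᵀ with W ~ GOE(n)) or from the null distribution ℚₙ (Y ~ GOE(n)). Let ℓ ∈ ℕ₊, I_{n,ℓ} = {v ∈ {−1,0,1}ⁿ : ‖v‖₀ = ℓ}, T = max_{v ∈ I_{n,ℓ}} vᵀ Y v, and T* = λℓ²/(2A²ρn). Suppose ρ ≤ λ²/(36 A⁴ log n) and ℓ lies in the interval [36 A⁴ ρ² n (log n)/λ², ρn]. Then ℙₙ[T < T*] + ℚₙ[T ≥ T*] ≤ 2 exp(−(λ²/(32 A⁴)) · ℓ²/(ρ² n)). -/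

import Mathlib

open MeasureTheory ProbabilityTheory Filter Matrix

/-- A vector `x ∈ ℝⁿ` is `(ρ,A)`-sparse if `‖x‖₂ = 1`, `‖x‖₀ = ρn`, and every
nonzero entry satisfies `1/(A√(ρn)) ≤ |xᵢ| ≤ A/√(ρn)`. -/
def SparseVec (n : ℕ) (ρ A : ℝ) (x : Fin n → ℝ) : Prop :=
  (∑ i, x i ^ 2) = 1 ∧
  ({i | x i ≠ 0}.ncard : ℝ) = ρ * n ∧
  ∀ i, x i ≠ 0 → 1 / (A * Real.sqrt (ρ * n)) ≤ |x i| ∧ |x i| ≤ A / Real.sqrt (ρ * n)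


/-- Matrices over `ℝ` carry the product (entrywise) measurable structure. -/
instance matrixMeasurableSpace {m n : Type*} :
    MeasurableSpace (Matrix m n ℝ) :=
  (inferInstance : MeasurableSpace (m → n → ℝ))

/-- The Gaussian orthogonal ensemble `GOE(n)`: a random symmetric `n×n` matrix with
independent entries `Wᵢᵢ ~ N(0, 2/n)` on the diagonal and `Wᵢⱼ = Wⱼᵢ ~ N(0, 1/n)`
off the diagonal, realized as a pushforward of i.i.d. standard Gaussians. -/
noncomputable def GOE (n : ℕ) : Measure (Matrix (Fin n) (Fin n) ℝ) :=
  (Measure.pi fun _ : Fin n × Fin n => gaussianReal 0 1).map fun g =>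
    Matrix.of fun i j =>
      if i = j then Real.sqrt (2 / n) * g (i, i)
      else if i < j then Real.sqrt (1 / n) * g (i, j)
      else Real.sqrt (1 / n) * g (j, i)

/-- The search set `I_{n,ℓ} = {v ∈ {−1,0,1}ⁿ : ‖v‖₀ = ℓ}`. -/
def signVecs (n ℓ : ℕ) : Set (Fin n → ℝ) :=
  {v | (∀ i, v i = -1 ∨ v i = 0 ∨ v i = 1) ∧ {i | v i ≠ 0}.ncard = ℓ}

/-- The test statistic `T = max_{v ∈ I_{n,ℓ}} vᵀ M v`. -/
noncomputable def Tstat (n ℓ : ℕ) (M : Matrix (Fin n) (Fin n) ℝ) : ℝ :=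
  sSup ((fun v => v ⬝ᵥ M.mulVec v) '' signVecs n ℓ)

/-!
For fixed `v`, the quadratic form `vᵀ W v` of a GOE matrix is a linear form in i.i.d. standard
Gaussians with variance `2‖v‖₂⁴ / n`, which is `2ℓ² / n` for every `v ∈ I_{n,ℓ}`. Under the null,
`vᵀ Y v = (-v)ᵀ Y (-v)` halves the search set, leaving at most `C(n,ℓ) 2^(ℓ-1) ≤ n^ℓ` vectors for
the union bound. This halving is what gives the prefactor `2` for all `n`: the bound on `ℓ` makes
`n^ℓ` at most the inverse square root of the Gaussian tail at `T*`. Under the planted law, the signs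
of `x` on `ℓ` of its large entries form a `v` with `λ ⟨v, x⟩² ≥ 2 T*`, so `T < T*` forces
`vᵀ W v ≤ -T*`. Only the sub-Gaussian tails of the forms `vᵀ W v` enter.
-/

lemma sum_eq_sum_ite_of_swap_eq {ι R : Type*} [Fintype ι] [LinearOrder ι]
    [NonAssocSemiring R] {s : ι × ι → R} (hs : ∀ p, s p.swap = s p) :
    ∑ p, s p = ∑ p, if p.1 = p.2 then s p else if p.1 < p.2 then 2 * s p else 0 := by
  have hlower : ∑ p, (if p.2 < p.1 then s p else 0) = ∑ p, if p.1 < p.2 then s p else 0 := by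
    rw [← (Equiv.prodComm ι ι).sum_comp]
    simp [hs]
  calc ∑ p, s p
      = ∑ p, ((if p.1 = p.2 then s p else if p.1 < p.2 then s p else 0) +
          if p.2 < p.1 then s p else 0) := by
        refine Finset.sum_congr rfl fun p _ => ?_
        rcases lt_trichotomy p.1 p.2 with h | h | h
        · simp [h, h.ne, h.not_gt]
        · simp [h]
        · simp [h, h.ne', h.not_gt]
    _ = ∑ p, if p.1 = p.2 then s p else if p.1 < p.2 then 2 * s p else 0 := by
        rw [Finset.sum_add_distrib, hlower, ← Finset.sum_add_distrib]
        refine Finset.sum_congr rfl fun p _ => ?_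
        split_ifs with heq hlt
        · exact absurd hlt heq.not_lt
        · exact add_zero _
        · exact (two_mul _).symm
        · exact add_zero _

lemma dotProduct_add_smul_vecMulVec_mulVec {ι R : Type*} [Fintype ι] [CommSemiring R]
    (W : Matrix ι ι R) (a : R) (x v : ι → R) :
    v ⬝ᵥ (W + a • vecMulVec x x) *ᵥ v = v ⬝ᵥ W *ᵥ v + a * (v ⬝ᵥ x) ^ 2 := by
  simp only [add_mulVec, dotProduct_add, smul_mulVec, vecMulVec_mulVec, op_smul_eq_smul,
    dotProduct_smul, smul_eq_mul, dotProduct_comm x v, sq]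

section Measurability

variable {m n : Type*}

lemma measurable_matrix_iff {α : Type*} [MeasurableSpace α] {f : α → Matrix m n ℝ} :
    Measurable f ↔ ∀ i j, Measurable fun a => f a i j :=
  measurable_pi_iff.trans (forall_congr' fun _ => measurable_pi_iff)

lemma measurable_matrix_apply (i : m) (j : n) : Measurable fun M : Matrix m n ℝ => M i j :=
  measurable_matrix_iff.1 measurable_id i j

lemma measurable_add_const_matrix (B : Matrix m n ℝ) : Measurable fun M => M + B :=
  measurable_matrix_iff.2 fun i j => (measurable_matrix_apply i j).add_const (B i j)

lemma measurable_dotProduct_mulVec [Fintype m] [Fintype n] (u : m → ℝ) (v : n → ℝ) :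
    Measurable fun M : Matrix m n ℝ => u ⬝ᵥ M *ᵥ v := by
  simp only [dotProduct, mulVec]
  exact Finset.measurable_fun_sum _ fun i _ => (Finset.measurable_fun_sum _ fun j _ =>
    (measurable_matrix_apply i j).mul_const _).const_mul _

end Measurability

section SubGaussian

lemma hasSubgaussianMGF_id_gaussianReal (v : NNReal) :
    HasSubgaussianMGF id v (gaussianReal 0 v) where
  integrable_exp_mul t := integrable_exp_mul_gaussianReal t
  mgf_le t := by simp [mgf_id_gaussianReal]

lemma hasSubgaussianMGF_eval_pi {ι : Type*} [Fintype ι] {Ω : ι → Type*}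
    [∀ i, MeasurableSpace (Ω i)] {μ : ∀ i, Measure (Ω i)} [∀ i, IsProbabilityMeasure (μ i)]
    {i : ι} {X : Ω i → ℝ} {c : NNReal} (hX : HasSubgaussianMGF X c (μ i)) :
    HasSubgaussianMGF (fun ω => X (ω i)) c (Measure.pi μ) :=
  .of_map (measurable_pi_apply i).aemeasurable <| by
    rwa [(measurePreserving_eval μ i).map_eq]

lemma hasSubgaussianMGF_sum_mul {ι Ω : Type*} [Fintype ι] [MeasurableSpace Ω] {μ : Measure Ω}
    {X : ι → Ω → ℝ} (hindep : iIndepFun X μ) {c : ι → NNReal}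
    (hX : ∀ i, HasSubgaussianMGF (X i) (c i) μ) (a : ι → ℝ) :
    HasSubgaussianMGF (fun ω => ∑ i, a i * X i ω) (∑ i, ‖a i‖₊ ^ 2 * c i) μ := by
  refine HasSubgaussianMGF.sum_of_iIndepFun
    (hindep.comp (fun i y => a i * y) fun i => measurable_const_mul (a i)) fun i _ => ?_
  have hparam : (⟨a i ^ 2, sq_nonneg (a i)⟩ : NNReal) = ‖a i‖₊ ^ 2 :=
    NNReal.eq (sq_abs (a i)).symm
  exact hparam ▸ (hX i).const_mul (a i)

end SubGaussian

section GOE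

variable {n : ℕ}

/-- The symmetric matrix built from an array `g` of scalars in the definition of `GOE n`, which is
the law of `goeMatrix g` when the entries of `g` are i.i.d. standard Gaussians. Only the entries of
`g` on and above the diagonal are read. -/
noncomputable def goeMatrix (g : Fin n × Fin n → ℝ) : Matrix (Fin n) (Fin n) ℝ :=
  Matrix.of fun i j =>
    if i = j then Real.sqrt (2 / n) * g (i, i)
    else if i < j then Real.sqrt (1 / n) * g (i, j)
    else Real.sqrt (1 / n) * g (j, i)

/-- The coefficient of `g p` in the quadratic form `vᵀ (goeMatrix g) v`, a linear form in `g`. -/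
noncomputable def goeCoeff (v : Fin n → ℝ) (p : Fin n × Fin n) : ℝ :=
  v p.1 * v p.2 *
    if p.1 = p.2 then Real.sqrt (2 / n) else if p.1 < p.2 then 2 * Real.sqrt (1 / n) else 0

lemma measurable_goeMatrix : Measurable (goeMatrix (n := n)) := by
  refine measurable_matrix_iff.2 fun i j => ?_
  simp only [goeMatrix, Matrix.of_apply]
  split_ifs <;> fun_prop

lemma GOE_eq_map_goeMatrix (n : ℕ) :
    GOE n = (Measure.pi fun _ => gaussianReal 0 1).map goeMatrix := rfl

instance isProbabilityMeasure_GOE (n : ℕ) : IsProbabilityMeasure (GOE n) :=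
  Measure.isProbabilityMeasure_map measurable_goeMatrix.aemeasurable

lemma goeMatrix_isSymm (g : Fin n × Fin n → ℝ) : (goeMatrix g).IsSymm := by
  refine IsSymm.ext fun i j => ?_
  rcases lt_trichotomy i j with h | rfl | h
  · simp [goeMatrix, h, h.ne, h.ne', h.not_gt]
  · rfl
  · simp [goeMatrix, h, h.ne, h.ne', h.not_gt]

lemma dotProduct_goeMatrix_mulVec (v : Fin n → ℝ) (g : Fin n × Fin n → ℝ) :
    v ⬝ᵥ goeMatrix g *ᵥ v = ∑ p, goeCoeff v p * g p := by
  have hsymm : ∀ p : Fin n × Fin n, v p.swap.1 * (goeMatrix g p.swap.1 p.swap.2 * v p.swap.2) =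
      v p.1 * (goeMatrix g p.1 p.2 * v p.2) := fun p => by
    rw [p.fst_swap, p.snd_swap, (goeMatrix_isSymm g).apply]
    ring
  simp only [dotProduct, mulVec, Finset.mul_sum]
  rw [← Fintype.sum_prod_type' fun i j => v i * (goeMatrix g i j * v j),
    sum_eq_sum_ite_of_swap_eq hsymm]
  refine Finset.sum_congr rfl fun ⟨i, j⟩ _ => ?_
  simp only [goeMatrix, goeCoeff, Matrix.of_apply]
  split_ifs with heq hlt
  · subst heq; ring
  · ring
  · ring

lemma sum_goeCoeff_sq (v : Fin n → ℝ) :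
    ∑ p, goeCoeff v p ^ 2 = 2 * (∑ i, v i ^ 2) ^ 2 / n := by
  calc ∑ p, goeCoeff v p ^ 2
      = ∑ p : Fin n × Fin n, if p.1 = p.2 then 2 / n * (v p.1 ^ 2 * v p.2 ^ 2)
          else if p.1 < p.2 then 2 * (2 / n * (v p.1 ^ 2 * v p.2 ^ 2)) else 0 := by
        refine Finset.sum_congr rfl fun p _ => ?_
        unfold goeCoeff
        split_ifs
        · rw [mul_pow, Real.sq_sqrt (by positivity)]; ring
        · rw [mul_pow, mul_pow 2, Real.sq_sqrt (by positivity)]; ring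
        · ring
    _ = ∑ p : Fin n × Fin n, 2 / n * (v p.1 ^ 2 * v p.2 ^ 2) :=
        (sum_eq_sum_ite_of_swap_eq fun p => by simp [mul_comm]).symm
    _ = 2 * (∑ i, v i ^ 2) ^ 2 / n := by
        rw [← Finset.mul_sum, sq (∑ i, v i ^ 2), Fintype.sum_mul_sum, ← Fintype.sum_prod_type']
        ring

lemma hasSubgaussianMGF_GOE (v : Fin n → ℝ) :
    HasSubgaussianMGF (fun W => v ⬝ᵥ W *ᵥ v) (2 * (∑ i, ‖v i‖₊ ^ 2) ^ 2 / n) (GOE n) := by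
  have hindep : iIndepFun (fun p (g : Fin n × Fin n → ℝ) => id (g p))
      (Measure.pi fun _ => gaussianReal 0 1) :=
    iIndepFun_pi fun _ => aemeasurable_id
  have hsum := hasSubgaussianMGF_sum_mul hindep
    (fun _ => hasSubgaussianMGF_eval_pi (hasSubgaussianMGF_id_gaussianReal 1)) (goeCoeff v)
  have hparam : ∑ p, ‖goeCoeff v p‖₊ ^ 2 * 1 = 2 * (∑ i, ‖v i‖₊ ^ 2) ^ 2 / n :=
    NNReal.eq (by simpa using sum_goeCoeff_sq v)
  rw [hparam] at hsum
  refine hsum.congr_identDistrib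
    ⟨hsum.aemeasurable, (measurable_dotProduct_mulVec v v).aemeasurable, ?_⟩
  rw [GOE_eq_map_goeMatrix,
    Measure.map_map (measurable_dotProduct_mulVec v v) measurable_goeMatrix]
  congr 1
  exact funext fun g => (dotProduct_goeMatrix_mulVec v g).symm

end GOE

section SignVectors

variable {n ℓ : ℕ}

/-- The `{-1, 0, 1}`-valued vector with support `S` whose negative entries are those in `S ∩ T`. -/
def signVec {ι : Type*} [DecidableEq ι] (S T : Finset ι) (i : ι) : ℝ :=
  if i ∈ S then if i ∈ T then -1 else 1 else 0

lemma neg_signVec {ι : Type*} [DecidableEq ι] (S T : Finset ι) :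
    -signVec S T = signVec S (S \ T) := by
  funext i
  by_cases hS : i ∈ S <;> by_cases hT : i ∈ T <;> simp [signVec, hS, hT]

lemma signVec_mem_signVecs (S T : Finset (Fin n)) : signVec S T ∈ signVecs n S.card := by
  refine ⟨fun i => ?_, ?_⟩
  · unfold signVec
    split_ifs <;> simp
  · rw [← Set.ncard_coe_finset]
    congr 1
    ext i
    by_cases hT : i ∈ T <;> simp [signVec, hT]

lemma exists_eq_signVec {v : Fin n → ℝ} (hv : v ∈ signVecs n ℓ) :
    ∃ S T : Finset (Fin n), S.card = ℓ ∧ T ⊆ S ∧ v = signVec S T := by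
  refine ⟨Finset.univ.filter (v · ≠ 0), Finset.univ.filter (v · = -1), ?_, ?_, ?_⟩
  · rw [← hv.2, ← Set.ncard_coe_finset, Finset.coe_filter_univ]
  · exact Finset.monotone_filter_right _ fun i _ hi => by norm_num [hi]
  · funext i
    rcases hv.1 i with h | h | h <;> norm_num [signVec, h]

lemma finite_signVecs (n ℓ : ℕ) : (signVecs n ℓ).Finite :=
  (Set.Finite.pi' fun _ => Set.toFinite {-1, 0, 1}).subset fun _ hv => hv.1

lemma sum_nnnorm_sq_of_mem_signVecs {v : Fin n → ℝ} (hv : v ∈ signVecs n ℓ) :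
    ∑ i, ‖v i‖₊ ^ 2 = ℓ := by
  obtain ⟨S, T, rfl, -, rfl⟩ := exists_eq_signVec hv
  have hentry : ∀ i, ‖signVec S T i‖₊ ^ 2 = if i ∈ S then 1 else 0 := fun i => by
    unfold signVec
    split_ifs <;> simp
  simp [hentry]

lemma hasSubgaussianMGF_GOE_of_mem_signVecs {v : Fin n → ℝ} (hv : v ∈ signVecs n ℓ) :
    HasSubgaussianMGF (fun W => v ⬝ᵥ W *ᵥ v) (2 * ℓ ^ 2 / n) (GOE n) := by
  simpa only [sum_nnnorm_sq_of_mem_signVecs hv] using hasSubgaussianMGF_GOE v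

lemma exists_mem_signVecs_mul_le_dotProduct {x : Fin n → ℝ} {δ : ℝ}
    (hx : ℓ ≤ {i | δ ≤ |x i|}.ncard) : ∃ v ∈ signVecs n ℓ, ℓ * δ ≤ v ⬝ᵥ x := by
  rw [Set.ncard_eq_toFinset_card'] at hx
  obtain ⟨S, hS, rfl⟩ := Finset.exists_subset_card_eq hx
  set T : Finset (Fin n) := {i | x i < 0} with hT
  have habs : ∀ i, signVec S T i * x i = if i ∈ S then |x i| else 0 := fun i => by
    rcases lt_or_ge (x i) 0 with h | h
    · simp [signVec, hT, h, abs_of_neg h]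
    · simp [signVec, hT, h.not_gt, abs_of_nonneg h]
  refine ⟨signVec S T, signVec_mem_signVecs S T, ?_⟩
  calc S.card * δ = ∑ _i ∈ S, δ := by rw [Finset.sum_const, nsmul_eq_mul]
    _ ≤ ∑ i ∈ S, |x i| := Finset.sum_le_sum fun i hi => by simpa using hS hi
    _ = signVec S T ⬝ᵥ x := by simp [dotProduct, habs]

lemma SparseVec.le_ncard {ρ A : ℝ} {x : Fin n → ℝ} (hx : SparseVec n ρ A x) (hℓ : ℓ ≤ ρ * n) :
    ℓ ≤ {i | 1 / (A * Real.sqrt (ρ * n)) ≤ |x i|}.ncard := by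
  have hsupp : ℓ ≤ {i | x i ≠ 0}.ncard := by exact_mod_cast hx.2.1 ▸ hℓ
  exact hsupp.trans (Set.ncard_le_ncard fun i hi => (hx.2.2 i hi).1)

end SignVectors

section Counting

lemma exists_card_le_forall_mem_or_sdiff_mem {ι : Type*} [DecidableEq ι] (S : Finset ι) :
    ∃ 𝒯 : Finset (Finset ι), 𝒯.card ≤ 2 ^ (S.card - 1) ∧ ∀ T ⊆ S, T ∈ 𝒯 ∨ S \ T ∈ 𝒯 := by
  rcases S.eq_empty_or_nonempty with rfl | ⟨m, hm⟩
  · exact ⟨{∅}, by simp⟩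
  refine ⟨(S.erase m).powerset, by rw [Finset.card_powerset, Finset.card_erase_of_mem hm],
    fun T hT => ?_⟩
  simp only [Finset.mem_powerset, Finset.subset_erase, hT, Finset.sdiff_subset, true_and,
    Finset.mem_sdiff, hm]
  exact (em (m ∈ T)).symm.imp_right not_not_intro

lemma choose_mul_two_pow_pred_le_pow (n ℓ : ℕ) : n.choose ℓ * 2 ^ (ℓ - 1) ≤ n ^ ℓ := by
  have hfact : 2 ^ (ℓ - 1) ≤ ℓ.factorial := by
    cases ℓ with
    | zero => simp
    | succ k => simpa [add_comm] using Nat.factorial_mul_pow_le_factorial (m := 1) (n := k)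
  calc n.choose ℓ * 2 ^ (ℓ - 1) ≤ n.choose ℓ * ℓ.factorial := Nat.mul_le_mul_left _ hfact
    _ = n.descFactorial ℓ := by rw [Nat.descFactorial_eq_factorial_mul_choose, mul_comm]
    _ ≤ n ^ ℓ := Nat.descFactorial_le_pow n ℓ

lemma exists_finset_mem_or_neg_mem_signVecs (n ℓ : ℕ) :
    ∃ F : Finset (Fin n → ℝ), F.card ≤ n ^ ℓ ∧ (∀ v ∈ F, v ∈ signVecs n ℓ) ∧
      ∀ v ∈ signVecs n ℓ, v ∈ F ∨ -v ∈ F := by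
  choose 𝒯 hcard hcover using exists_card_le_forall_mem_or_sdiff_mem (ι := Fin n)
  refine ⟨(Finset.univ.powersetCard ℓ).biUnion fun S => (𝒯 S).image (signVec S), ?_, ?_, ?_⟩
  · calc _ ≤ (Finset.univ.powersetCard ℓ).card * 2 ^ (ℓ - 1) :=
          Finset.card_biUnion_le_card_mul _ _ _ fun S hS =>
            Finset.card_image_le.trans ((Finset.mem_powersetCard.1 hS).2 ▸ hcard S)
      _ ≤ n ^ ℓ := by
          rw [Finset.card_powersetCard, Finset.card_univ, Fintype.card_fin]
          exact choose_mul_two_pow_pred_le_pow n ℓ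
  · simp only [Finset.mem_biUnion, Finset.mem_powersetCard, Finset.mem_image]
    rintro _ ⟨S, ⟨-, rfl⟩, T, -, rfl⟩
    exact signVec_mem_signVecs S T
  · intro v hv
    obtain ⟨S, T, rfl, hTS, rfl⟩ := exists_eq_signVec hv
    have hmem : ∀ T' ∈ 𝒯 S, signVec S T' ∈ (Finset.univ.powersetCard S.card).biUnion
        fun S => (𝒯 S).image (signVec S) := fun T' hT' =>
      Finset.mem_biUnion.2 ⟨S, by simp [Finset.mem_powersetCard], Finset.mem_image_of_mem _ hT'⟩
    rw [neg_signVec]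
    exact (hcover S T hTS).imp (hmem T) (hmem (S \ T))

end Counting

section Tstat

variable {n ℓ : ℕ} {t : ℝ}

lemma dotProduct_mulVec_le_Tstat {v : Fin n → ℝ} (hv : v ∈ signVecs n ℓ)
    (M : Matrix (Fin n) (Fin n) ℝ) : v ⬝ᵥ M *ᵥ v ≤ Tstat n ℓ M :=
  le_csSup ((finite_signVecs n ℓ).image _).bddAbove ⟨v, hv, rfl⟩

-- Positivity of `t` excludes the junk value `sSup ∅ = 0`, taken when `n < ℓ`.
lemma exists_le_dotProduct_mulVec (ht : 0 < t) {M : Matrix (Fin n) (Fin n) ℝ}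
    (h : t ≤ Tstat n ℓ M) : ∃ v ∈ signVecs n ℓ, t ≤ v ⬝ᵥ M *ᵥ v := by
  rcases (signVecs n ℓ).eq_empty_or_nonempty with hempty | hne
  · rw [Tstat, hempty, Set.image_empty, Real.sSup_empty] at h
    exact absurd h ht.not_ge
  · obtain ⟨v, hv, hvM⟩ := (hne.image fun v => v ⬝ᵥ M *ᵥ v).csSup_mem
      ((finite_signVecs n ℓ).image _)
    exact ⟨v, hv, h.trans_eq hvM.symm⟩

variable {μ : Measure (Matrix (Fin n) (Fin n) ℝ)} [IsFiniteMeasure μ] {c : NNReal}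

lemma measureReal_le_Tstat_le
    (hμ : ∀ v ∈ signVecs n ℓ, HasSubgaussianMGF (fun W => v ⬝ᵥ W *ᵥ v) c μ) (ht : 0 < t) :
    μ.real {Y | t ≤ Tstat n ℓ Y} ≤ n ^ ℓ * Real.exp (-t ^ 2 / (2 * c)) := by
  obtain ⟨F, hcard, hmem, hcover⟩ := exists_finset_mem_or_neg_mem_signVecs n ℓ
  have hunion : {Y | t ≤ Tstat n ℓ Y} ⊆ ⋃ v ∈ F, {Y | t ≤ v ⬝ᵥ Y *ᵥ v} := fun Y hY => by
    obtain ⟨v, hv, hvY⟩ := exists_le_dotProduct_mulVec ht hY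
    rcases hcover v hv with hF | hF
    · exact Set.mem_biUnion hF hvY
    · exact Set.mem_biUnion hF (by simpa [mulVec_neg] using hvY)
  calc μ.real {Y | t ≤ Tstat n ℓ Y}
      ≤ ∑ v ∈ F, μ.real {Y | t ≤ v ⬝ᵥ Y *ᵥ v} :=
        (measureReal_mono hunion (measure_ne_top _ _)).trans (measureReal_biUnion_finset_le _ _)
    _ ≤ F.card • Real.exp (-t ^ 2 / (2 * c)) :=
        Finset.sum_le_card_nsmul _ _ _ fun v hv => (hμ v (hmem v hv)).measure_ge_le ht.le
    _ ≤ n ^ ℓ * Real.exp (-t ^ 2 / (2 * c)) := by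
        rw [nsmul_eq_mul]
        gcongr
        exact_mod_cast hcard

lemma measureReal_map_Tstat_lt_le {lam : ℝ} {x v : Fin n → ℝ} (hv : v ∈ signVecs n ℓ)
    (hμ : HasSubgaussianMGF (fun W => v ⬝ᵥ W *ᵥ v) c μ) (ht : 0 ≤ t)
    (hsignal : 2 * t ≤ lam * (v ⬝ᵥ x) ^ 2) :
    (μ.map fun W => W + lam • vecMulVec x x).real {Y | Tstat n ℓ Y < t} ≤
      Real.exp (-t ^ 2 / (2 * c)) := by
  calc (μ.map fun W => W + lam • vecMulVec x x).real {Y | Tstat n ℓ Y < t}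
      ≤ (μ.map fun W => W + lam • vecMulVec x x).real {Y | v ⬝ᵥ Y *ᵥ v < t} :=
        measureReal_mono fun Y hY => (dotProduct_mulVec_le_Tstat hv Y).trans_lt hY
    _ = μ.real {W | v ⬝ᵥ W *ᵥ v + lam * (v ⬝ᵥ x) ^ 2 < t} := by
        rw [map_measureReal_apply (measurable_add_const_matrix _)
          (measurableSet_lt (measurable_dotProduct_mulVec v v) measurable_const)]
        simp only [Set.preimage_ofPred_eq, dotProduct_add_smul_vecMulVec_mulVec]
    _ ≤ μ.real {W | t ≤ -(v ⬝ᵥ W *ᵥ v)} := measureReal_mono fun W hW => by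
        simp only [Set.mem_ofPred_eq] at hW ⊢
        linarith
    _ ≤ Real.exp (-t ^ 2 / (2 * c)) := hμ.neg.measure_ge_le ht

lemma map_Tstat_lt_add_le_Tstat_le {lam : ℝ} {x v : Fin n → ℝ} (hv : v ∈ signVecs n ℓ)
    (hμ : ∀ v ∈ signVecs n ℓ, HasSubgaussianMGF (fun W => v ⬝ᵥ W *ᵥ v) c μ) (ht : 0 < t)
    (hsignal : 2 * t ≤ lam * (v ⬝ᵥ x) ^ 2) (hentropy : ℓ * Real.log n ≤ t ^ 2 / (4 * c)) :
    μ.map (fun W => W + lam • vecMulVec x x) {Y | Tstat n ℓ Y < t} + μ {Y | t ≤ Tstat n ℓ Y} ≤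
      ENNReal.ofReal (2 * Real.exp (-(t ^ 2 / (4 * c)))) := by
  have hexponent : -t ^ 2 / (2 * c) = -(t ^ 2 / (4 * c)) + -(t ^ 2 / (4 * c)) := by ring
  have hpow : (n : ℝ) ^ ℓ ≤ Real.exp (t ^ 2 / (4 * c)) :=
    calc (n : ℝ) ^ ℓ ≤ Real.exp (Real.log n) ^ ℓ := by gcongr; exact Real.le_exp_log _
      _ = Real.exp (ℓ * Real.log n) := (Real.exp_nat_mul _ _).symm
      _ ≤ Real.exp (t ^ 2 / (4 * c)) := Real.exp_le_exp.2 hentropy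
  have hplanted : (μ.map fun W => W + lam • vecMulVec x x).real {Y | Tstat n ℓ Y < t} ≤
      Real.exp (-(t ^ 2 / (4 * c))) :=
    (measureReal_map_Tstat_lt_le hv (hμ v hv) ht.le hsignal).trans <| by
      rw [hexponent, Real.exp_le_exp, add_le_iff_nonpos_left, neg_nonpos]
      positivity
  have hnull : μ.real {Y | t ≤ Tstat n ℓ Y} ≤ Real.exp (-(t ^ 2 / (4 * c))) :=
    calc μ.real {Y | t ≤ Tstat n ℓ Y}
        ≤ Real.exp (t ^ 2 / (4 * c)) * Real.exp (-t ^ 2 / (2 * c)) :=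
          (measureReal_le_Tstat_le hμ ht).trans (by gcongr)
      _ = Real.exp (-(t ^ 2 / (4 * c))) := by rw [hexponent, ← Real.exp_add, add_neg_cancel_left]
  rw [← ofReal_measureReal, ← ofReal_measureReal, ← ENNReal.ofReal_add (by positivity)
    (by positivity), two_mul]
  exact ENNReal.ofReal_le_ofReal (add_le_add hplanted hnull)

end Tstat

theorem wigner_detection_general {n ℓ : ℕ} {lam A ρ : ℝ} (hlam : 0 < lam) (hA : 0 < A)
    (hρ : 0 < ρ) (hℓ : 0 < ℓ) {μ : Measure (Matrix (Fin n) (Fin n) ℝ)} [IsProbabilityMeasure μ]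
    (hμ : ∀ v ∈ signVecs n ℓ, HasSubgaussianMGF (fun W => v ⬝ᵥ W *ᵥ v) (2 * ℓ ^ 2 / n) μ)
    {x : Fin n → ℝ} (hx : ℓ ≤ {i | 1 / (A * Real.sqrt (ρ * n)) ≤ |x i|}.ncard)
    (hℓlo : 32 * A ^ 4 / lam ^ 2 * (ρ ^ 2 * n * Real.log n) ≤ ℓ) :
    μ.map (fun W => W + lam • vecMulVec x x)
        {Y | Tstat n ℓ Y < lam * ℓ ^ 2 / (2 * A ^ 2 * ρ * n)} +
      μ {Y | lam * ℓ ^ 2 / (2 * A ^ 2 * ρ * n) ≤ Tstat n ℓ Y} ≤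
      ENNReal.ofReal
        (2 * Real.exp (-(lam ^ 2 / (32 * A ^ 4)) * (ℓ ^ 2 / (ρ ^ 2 * n)))) := by
  have hn : 0 < n := hℓ.trans_le (by simpa using hx.trans (Set.ncard_le_card _))
  obtain ⟨v, hv, hvx⟩ := exists_mem_signVecs_mul_le_dotProduct hx
  have hsignal : 2 * (lam * ℓ ^ 2 / (2 * A ^ 2 * ρ * n)) ≤ lam * (v ⬝ᵥ x) ^ 2 :=
    calc 2 * (lam * ℓ ^ 2 / (2 * A ^ 2 * ρ * n))
        = lam * (ℓ * (1 / (A * Real.sqrt (ρ * n)))) ^ 2 := by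
          rw [mul_pow, div_pow, mul_pow A, Real.sq_sqrt (by positivity)]
          field_simp
      _ ≤ lam * (v ⬝ᵥ x) ^ 2 := by gcongr
  have hexponent : (lam * ℓ ^ 2 / (2 * A ^ 2 * ρ * n)) ^ 2 / (4 * (2 * ℓ ^ 2 / n : NNReal)) =
      lam ^ 2 / (32 * A ^ 4) * (ℓ ^ 2 / (ρ ^ 2 * n)) := by
    push_cast
    field_simp
    norm_num
  have hentropy : ℓ * Real.log n ≤ lam ^ 2 / (32 * A ^ 4) * (ℓ ^ 2 / (ρ ^ 2 * n)) :=
    calc ℓ * Real.log n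
        = lam ^ 2 / (32 * A ^ 4) * (ℓ / (ρ ^ 2 * n)) *
            (32 * A ^ 4 / lam ^ 2 * (ρ ^ 2 * n * Real.log n)) := by field_simp
      _ ≤ lam ^ 2 / (32 * A ^ 4) * (ℓ / (ρ ^ 2 * n)) * ℓ := by gcongr
      _ = lam ^ 2 / (32 * A ^ 4) * (ℓ ^ 2 / (ρ ^ 2 * n)) := by ring
  rw [← hexponent] at hentropy
  simpa only [neg_mul, hexponent] using
    map_Tstat_lt_add_le_Tstat_le hv hμ (by positivity) hsignal hentropy

/-- **Wigner detection** (Theorem det_wgn). For a `(ρ,A)`-sparse signal `x`, with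
`Y = W + λxxᵀ` (planted, `W ~ GOE(n)`) or `Y ~ GOE(n)` (null), threshold
`T* = λℓ²/(2A²ρn)`, and the stated conditions on `ρ` and `ℓ`, the total failure
probability satisfies `ℙₙ[T < T*] + ℚₙ[T ≥ T*] ≤ 2 exp(−(λ²/(32A⁴))·ℓ²/(ρ²n))`. -/
theorem wigner_detection (n : ℕ) (hn : 0 < n)
    (lam A ρ : ℝ) (hlam : 0 < lam) (hA : 1 ≤ A) (hρ0 : 0 < ρ) (hρ1 : ρ ≤ 1)
    (x : Fin n → ℝ) (hx : SparseVec n ρ A x)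
    (ℓ : ℕ) (hℓ : 0 < ℓ)
    (hρcond : ρ ≤ lam ^ 2 / (36 * A ^ 4) * (1 / Real.log n))
    (hℓlo : 36 * A ^ 4 / lam ^ 2 * (ρ ^ 2 * n * Real.log n) ≤ (ℓ : ℝ))
    (hℓhi : (ℓ : ℝ) ≤ ρ * n) :
    (GOE n).map (fun W => W + lam • vecMulVec x x)
        {Y | Tstat n ℓ Y < lam * ℓ ^ 2 / (2 * A ^ 2 * ρ * n)} +
      GOE n {Y | lam * ℓ ^ 2 / (2 * A ^ 2 * ρ * n) ≤ Tstat n ℓ Y} ≤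
      ENNReal.ofReal
        (2 * Real.exp (-(lam ^ 2 / (32 * A ^ 4)) * (ℓ ^ 2 / (ρ ^ 2 * n)))) :=
  wigner_detection_general hlam (by positivity) hρ0 hℓ
    (fun _ => hasSubgaussianMGF_GOE_of_mem_signVecs) (hx.le_ncard hℓhi)
    (le_trans (by gcongr; norm_num) hℓlo)
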